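/- arXiv:1207.2895 — 3 statements merged into one kernel-verified Lean document; each statement's English description precedes it below -/
import Mathlib

section
/- Let α ∈ ℂ with α ≠ 0, let l ≥ 1, and let W : ℤ × ℤ → ((Fin (l+1) → ℂ) → ℂ) be a family of functions such that for every solution u of B_α with u(n,m) ≠ 0 for all n,m one has W(n+1,m)(u(n+1,m), u(n+1,m+1), …, u(n+1,m+l)) = W(n,m)(u(n,m), u(n,m+1), …, u(n,m+l)) for all n,m ∈ ℤ. Then for every solution v of L_α with v(n,m) ≠ 0 for all n,m, the function Ŵ(n,m) := W(n,m)(v(n+1,m)/v(n,m), v(n+1,m+1)/v(n,m+1), …, v(n+1,m+l)/v(n,m+l)) satisfies Ŵ(n+1,m) = Ŵ(n,m) for all n,m ∈ ℤ. -/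
/-- `v` is a solution of the linear equation `L_α`. -/
def LinSol (α : ℂ) (v : ℤ → ℤ → ℂ) : Prop :=
  ∀ n m : ℤ, v (n + 1) (m + 1) + v n (m + 1) = α ^ n * (v (n + 1) m - v n m)

/-- `u` is a solution of the discrete Burgers-type equation `B_α`. -/
def BurSol (α : ℂ) (u : ℤ → ℤ → ℂ) : Prop :=
  ∀ n m : ℤ, (u (n + 1) (m + 1) + 1) * (u n m - 1) * u n (m + 1)
    = α * (u n (m + 1) + 1) * (u (n + 1) m - 1) * u n m

/-!
Put `u n m = v (n + 1) m / v n m`, so that `u n m * v n m = v (n + 1) m`. In terms of `u` the linear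
equation for `v` reads `(u n (m + 1) + 1) * v n (m + 1) = a n m * (u n m - 1) * v n m`. The
Burgers-type equation for `u` is the compatibility condition of these two rules for moving `v`, so a
first integral of the Burgers-type equation can be evaluated at `u`.
-/

variable {K : Type*}

/-- The linear equation `L_α` over an arbitrary ring, with `α ^ n` replaced by a coefficient `a`
that may depend on both lattice variables. -/
def IsLinearSol [Ring K] (a v : ℤ → ℤ → K) : Prop :=
  ∀ n m : ℤ, v (n + 1) (m + 1) + v n (m + 1) = a n m * (v (n + 1) m - v n m)

/-- The discrete Burgers-type equation `B_α` over an arbitrary ring, with the constant `α` replaced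
by a coefficient `b` that may depend on both lattice variables. -/
def IsBurgersSol [Ring K] (b u : ℤ → ℤ → K) : Prop :=
  ∀ n m : ℤ, (u (n + 1) (m + 1) + 1) * (u n m - 1) * u n (m + 1)
    = b n m * (u n (m + 1) + 1) * (u (n + 1) m - 1) * u n m

/-- The discrete Hopf–Cole transform, which linearizes the discrete Burgers-type equation. -/
def hopfCole [Div K] (v : ℤ → ℤ → K) (n m : ℤ) : K :=
  v (n + 1) m / v n m

section HopfCole

variable [Field K] {a b v : ℤ → ℤ → K}

theorem hopfCole_mul_self {n m : ℤ} (hv₀ : v n m ≠ 0) : hopfCole v n m * v n m = v (n + 1) m :=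
  div_mul_cancel₀ _ hv₀

theorem hopfCole_ne_zero (hv₀ : ∀ n m, v n m ≠ 0) (n m : ℤ) : hopfCole v n m ≠ 0 :=
  div_ne_zero (hv₀ (n + 1) m) (hv₀ n m)

theorem IsLinearSol.hopfCole_add_one_mul (hv : IsLinearSol a v) {n m : ℤ}
    (hv₀ : v n m ≠ 0) (hv₁ : v n (m + 1) ≠ 0) :
    (hopfCole v n (m + 1) + 1) * v n (m + 1) = a n m * (hopfCole v n m - 1) * v n m := by
  rw [add_one_mul, mul_assoc, sub_one_mul, hopfCole_mul_self hv₀, hopfCole_mul_self hv₁]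
  exact hv n m

theorem IsLinearSol.isBurgersSol_hopfCole (hv : IsLinearSol a v)
    (hab : ∀ n m, a (n + 1) m = a n m * b n m) (hv₀ : ∀ n m, v n m ≠ 0) :
    IsBurgersSol b (hopfCole v) := by
  intro n m
  have shift (k : ℤ) : hopfCole v n k * v n k = v (n + 1) k := hopfCole_mul_self (hv₀ n k)
  have transport (k : ℤ) := hv.hopfCole_add_one_mul (hv₀ k m) (hv₀ k (m + 1))
  refine mul_right_cancel₀ (hv₀ n (m + 1)) ?_
  set u := hopfCole v
  calc (u (n + 1) (m + 1) + 1) * (u n m - 1) * u n (m + 1) * v n (m + 1)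
      = (u n m - 1) * ((u (n + 1) (m + 1) + 1) * v (n + 1) (m + 1)) := by
        rw [← shift]; ring
    _ = (u n m - 1) * (a n m * b n m * (u (n + 1) m - 1) * (u n m * v n m)) := by
        rw [transport, hab, shift]
    _ = b n m * (u (n + 1) m - 1) * u n m * (a n m * (u n m - 1) * v n m) := by ring
    _ = b n m * (u n (m + 1) + 1) * (u (n + 1) m - 1) * u n m * v n (m + 1) := by
        rw [← transport]; ring

theorem first_integral_transfer_m_direction_general {ι β : Type*} (s : ι → ℤ)
    (hab : ∀ n m, a (n + 1) m = a n m * b n m) (W : ℤ → ℤ → (ι → K) → β)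
    (hW : ∀ u, IsBurgersSol b u → (∀ n m, u n m ≠ 0) → ∀ n m,
      W (n + 1) m (fun i => u (n + 1) (m + s i)) = W n m (fun i => u n (m + s i)))
    (hv : IsLinearSol a v) (hv₀ : ∀ n m, v n m ≠ 0) (n m : ℤ) :
    W (n + 1) m (fun i => hopfCole v (n + 1) (m + s i))
      = W n m (fun i => hopfCole v n (m + s i)) :=
  hW (hopfCole v) (hv.isBurgersSol_hopfCole hab hv₀) (hopfCole_ne_zero hv₀) n m

end HopfCole

/-- The `m`-direction first-integral invariance of `B_α` transfers, through the
Hopf–Cole transform `u(n,m) = v(n+1,m)/v(n,m)`, to an invariant of `L_α`. -/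
theorem first_integral_transfer_m_direction (α : ℂ) (hα : α ≠ 0) (l : ℕ) (hl : 1 ≤ l)
    (W : ℤ → ℤ → (Fin (l + 1) → ℂ) → ℂ)
    (hW : ∀ u : ℤ → ℤ → ℂ, BurSol α u → (∀ n m : ℤ, u n m ≠ 0) → ∀ n m : ℤ,
      W (n + 1) m (fun i => u (n + 1) (m + ((i : ℕ) : ℤ)))
        = W n m (fun i => u n (m + ((i : ℕ) : ℤ))))
    (v : ℤ → ℤ → ℂ) (hv : LinSol α v) (hv0 : ∀ n m : ℤ, v n m ≠ 0) :
    ∀ n m : ℤ,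
      W (n + 1) m (fun i => v (n + 2) (m + ((i : ℕ) : ℤ)) / v (n + 1) (m + ((i : ℕ) : ℤ)))
        = W n m (fun i => v (n + 1) (m + ((i : ℕ) : ℤ)) / v n (m + ((i : ℕ) : ℤ))) := by
  intro n m
  simpa only [hopfCole, add_assoc, one_add_one_eq_two] using
    first_integral_transfer_m_direction_general (a := fun n _ => α ^ n) (b := fun _ _ => α)
      (fun i : Fin (l + 1) => ((i : ℕ) : ℤ)) (fun n _ => zpow_add_one₀ hα n) W hW hv hv0 n m
end

section
/- Let α ∈ ℂ with α ≠ 0 and let v be a solution of the linear equation L_α. Define the second-direction Laplace transforms v̌_j : ℤ × ℤ → ℂ by v̌_0 = v and v̌_j(n,m) = v̌_{j−1}(n,m+1) − α^{n−j}·v̌_{j−1}(n,m) for j ≥ 1. Then for every j ≥ 0 and all n,m ∈ ℤ: v̌_j(n+1,m+1) + v̌_j(n,m+1) = α^{n−j}·v̌_j(n+1,m) − α^n·v̌_j(n,m); equivalently, v̌_j satisfies (T₁ + 1)(T₂ − α^{n−j−1})v̌_j + α^{n−j−1}(1 + α^{j+1})·v̌_j = 0, where T₁, T₂ are the unit shifts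 in n and m. -/
/-- The second-direction discrete Laplace transforms:
`v̌_0 = v` and `v̌_j(n,m) = v̌_{j−1}(n,m+1) − α^{n−j}·v̌_{j−1}(n,m)` for `j ≥ 1`. -/
noncomputable def lap2 (α : ℂ) (v : ℤ → ℤ → ℂ) : ℕ → ℤ → ℤ → ℂ
  | 0 => v
  | j + 1 => fun n m => lap2 α v j n (m + 1) - α ^ (n - ((j : ℤ) + 1)) * lap2 α v j n m

/-! Regard `v̌_j` as the sequence, indexed by `n`, of its rows `v̌_j(n, ·)`, and let `T` be the
shift of rows in `m`. An equation `T u(n+1) + T u(n) = c(n+1) u(n+1) - b(n) u(n)` says that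
`u'(n) := (T - c(n)) u(n)` satisfies `u'(n+1) = -(T + b(n)) u(n)`. The coefficients do not depend on
`m`, so `T - c(n)` commutes with `T + b(n)`, and applying it gives
`(T - c(n)) u'(n+1) = -(T + b(n)) u'(n)`: the same equation for `u'`, with `c(n+1)` replaced by
`c(n)`. For `v̌_j` one takes `c(n) = α^{n-j-1}` and `b(n) = α^n`. -/

section Hyperbolic

variable {R M ι : Type*} [CommRing R] [AddCommGroup M] [Module R M]

/-- The Laplace transform of a sequence `u` of rows along the row endomorphism `T`, that is, the
operator `T - c(n)` applied to the row `u n`. -/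
def laplaceTransform (T : Module.End R M) (c : ι → R) (u : ι → M) : ι → M :=
  fun n => T (u n) - c n • u n

theorem laplaceTransform_comm (T : Module.End R M) (c d : ι → R) (u : ι → M) :
    laplaceTransform T c (laplaceTransform T d u) =
      laplaceTransform T d (laplaceTransform T c u) := by
  funext n
  simp only [laplaceTransform, map_sub, map_smul]
  module

variable [Add ι] [One ι]

/-- The hyperbolic difference equation with coefficients `a` and `b`, for a sequence `u` of rows.
The equation of the paper for `v̌_j` is the case where `T` is the shift in `m`, `a n = α ^ (n - j)`
and `b n = α ^ n`. -/
def IsHyperbolicSolution (T : Module.End R M) (a b : ι → R) (u : ι → M) : Prop :=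
  ∀ n, T (u (n + 1)) + T (u n) = a n • u (n + 1) - b n • u n

theorem isHyperbolicSolution_iff_sub_eq_neg_laplaceTransform {T : Module.End R M} {a b : ι → R}
    {u : ι → M} :
    IsHyperbolicSolution T a b u ↔
      ∀ n, T (u (n + 1)) - a n • u (n + 1) = -laplaceTransform T (-b) u n := by
  refine forall_congr' fun n => ?_
  simp only [laplaceTransform, Pi.neg_apply, neg_smul]
  grind

protected theorem IsHyperbolicSolution.laplaceTransform {T : Module.End R M}
    {b c : ι → R} {u : ι → M} (hu : IsHyperbolicSolution T (fun n => c (n + 1)) b u) :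
    IsHyperbolicSolution T c b (laplaceTransform T c u) := by
  rw [isHyperbolicSolution_iff_sub_eq_neg_laplaceTransform] at hu ⊢
  intro n
  have transform_add_one : laplaceTransform T c u (n + 1) =
      -laplaceTransform T (-b) u n := hu n
  calc
    T (laplaceTransform T c u (n + 1)) - c n • laplaceTransform T c u (n + 1)
      = -laplaceTransform T c (laplaceTransform T (-b) u) n := by
        rw [transform_add_one, map_neg, smul_neg, ← neg_sub']
        rfl
    _ = -laplaceTransform T (-b) (laplaceTransform T c u) n := by
        rw [laplaceTransform_comm]

end Hyperbolic

theorem LinSol.isHyperbolicSolution {α : ℂ} {v : ℤ → ℤ → ℂ} (hv : LinSol α v) :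
    IsHyperbolicSolution (LinearMap.funLeft ℂ ℂ (· + 1)) (α ^ ·) (α ^ ·) v :=
  fun n => funext fun m => (hv n m).trans (mul_sub _ _ _)

theorem lap2_succ (α : ℂ) (v : ℤ → ℤ → ℂ) (j : ℕ) :
    lap2 α v (j + 1) =
      laplaceTransform (LinearMap.funLeft ℂ ℂ (· + 1)) (fun n : ℤ => α ^ (n - ((j : ℤ) + 1)))
        (lap2 α v j) :=
  rfl

theorem LinSol.isHyperbolicSolution_lap2 {α : ℂ} {v : ℤ → ℤ → ℂ} (hv : LinSol α v) (j : ℕ) :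
    IsHyperbolicSolution (LinearMap.funLeft ℂ ℂ (· + 1)) (fun n : ℤ => α ^ (n - (j : ℤ)))
      (α ^ ·) (lap2 α v j) := by
  induction j with
  | zero => simpa only [Nat.cast_zero, sub_zero, lap2] using hv.isHyperbolicSolution
  | succ j ih =>
    rw [Nat.cast_succ, lap2_succ]
    refine IsHyperbolicSolution.laplaceTransform ?_
    simpa only [add_sub_add_right_eq_sub] using ih

/-- Each second-direction Laplace transform `v̌_j` of a solution of `L_α` satisfies
`v̌_j(n+1,m+1) + v̌_j(n,m+1) = α^{n−j}·v̌_j(n+1,m) − α^n·v̌_j(n,m)`, i.e.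
`(T₁ + 1)(T₂ − α^{n−j−1})v̌_j + α^{n−j−1}(1 + α^{j+1})·v̌_j = 0`. -/
theorem laplace_transform_m_equation (α : ℂ) (hα : α ≠ 0)
    (v : ℤ → ℤ → ℂ) (hv : LinSol α v) :
    ∀ (j : ℕ) (n m : ℤ),
      lap2 α v j (n + 1) (m + 1) + lap2 α v j n (m + 1)
        = α ^ (n - (j : ℤ)) * lap2 α v j (n + 1) m - α ^ n * lap2 α v j n m := by
  intro j n m
  exact congr_fun (hv.isHyperbolicSolution_lap2 j n) m
end

section
/- Let α ∈ ℂ with α ≠ 0 and let l̂ ≥ 1. Suppose the linear equation L_α possesses a first integral of order l̂ in the m-direction. Then there exists l̃ with 0 ≤ l̃ < l̂ such that H(n,l̃) = 0 for all n ∈ ℤ, where H(n,j) := α^{n−j−1}·(1 + α^{j+1}) for j ≥ 0. Equivalently (since α ≠ 0), there exists j with 1 ≤ j ≤ l̂ and α^j = −1. -/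
/-- `W` is a first integral of order `k` in the `n`-direction of the equation `E`:
(i) each `W n m` is differentiable at every point with all coordinates nonzero;
(ii) `W` is invariant under the `m`-shift on nowhere-vanishing solutions of `E`;
(iii) `W` genuinely depends on its 0-th and `k`-th arguments (nonzero partial
derivatives at some point with nonzero coordinates, for some `n, m`). -/
def IsFirstIntegralN (E : (ℤ → ℤ → ℂ) → Prop) (k : ℕ)
    (W : ℤ → ℤ → (Fin (k + 1) → ℂ) → ℂ) : Prop :=
  (∀ (n m : ℤ) (x : Fin (k + 1) → ℂ), (∀ i, x i ≠ 0) → DifferentiableAt ℂ (W n m) x)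
  ∧ (∀ w : ℤ → ℤ → ℂ, E w → (∀ n m : ℤ, w n m ≠ 0) → ∀ n m : ℤ,
      W n (m + 1) (fun i => w (n + ((i : ℕ) : ℤ)) (m + 1))
        = W n m (fun i => w (n + ((i : ℕ) : ℤ)) m))
  ∧ (∃ (n m : ℤ) (x : Fin (k + 1) → ℂ), (∀ i, x i ≠ 0)
      ∧ fderiv ℂ (W n m) x (Pi.single 0 1) ≠ 0)
  ∧ (∃ (n m : ℤ) (x : Fin (k + 1) → ℂ), (∀ i, x i ≠ 0)
      ∧ fderiv ℂ (W n m) x (Pi.single (Fin.last k) 1) ≠ 0)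

/-- `W` is a first integral of order `l` in the `m`-direction of the equation `E`. -/
def IsFirstIntegralM (E : (ℤ → ℤ → ℂ) → Prop) (l : ℕ)
    (W : ℤ → ℤ → (Fin (l + 1) → ℂ) → ℂ) : Prop :=
  (∀ (n m : ℤ) (x : Fin (l + 1) → ℂ), (∀ i, x i ≠ 0) → DifferentiableAt ℂ (W n m) x)
  ∧ (∀ w : ℤ → ℤ → ℂ, E w → (∀ n m : ℤ, w n m ≠ 0) → ∀ n m : ℤ,
      W (n + 1) m (fun i => w (n + 1) (m + ((i : ℕ) : ℤ)))
        = W n m (fun i => w n (m + ((i : ℕ) : ℤ))))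
  ∧ (∃ (n m : ℤ) (x : Fin (l + 1) → ℂ), (∀ i, x i ≠ 0)
      ∧ fderiv ℂ (W n m) x (Pi.single 0 1) ≠ 0)
  ∧ (∃ (n m : ℤ) (x : Fin (l + 1) → ℂ), (∀ i, x i ≠ 0)
      ∧ fderiv ℂ (W n m) x (Pi.single (Fin.last l) 1) ≠ 0)

/-- `H(n,j) = α^{n−j−1}·(1 + α^{j+1})` for `j ≥ 0`. -/
noncomputable def Hfun (α : ℂ) (n : ℤ) (j : ℕ) : ℂ :=
  α ^ (n - (j : ℤ) - 1) * (1 + α ^ (j + 1))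

/-!
Consider `v(n+1,m+1) + v(n,m+1) = a(n) (v(n+1,m) − v(n,m))` with arbitrary nonzero coefficients
`a(n)`. Nowhere-vanishing solutions can be prescribed on finite segments of two neighbouring
columns, so the invariance of `W` can be differentiated: the differentials of `W(n,m)` and
`W(n+1,m)` along a solution agree on tangent vectors related by the equation. Testing them on the
related pair `((a(n) − t) tⁱ)ᵢ`, `((a(n) + t) tⁱ)ᵢ` turns each differential into a polynomial
`pₙ(t)` of degree at most `l`, with `(t + a(n)) pₙ₊₁(t) = (a(n) − t) pₙ(t)`. Iterating `l + 1`
times, `(t + a(n)) ⋯ (t + a(n+l))` divides `(a(n) − t) ⋯ (a(n+l) − t) pₙ(t)`. If no two of the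
`a(n), …, a(n+l)` add up to zero, the two products are coprime, and `pₙ = 0` by degree.
For `a(n) = αⁿ`, two of these coefficients add up to zero exactly when a power `αʲ` with
`1 ≤ j ≤ l` equals `-1`.
-/

section Chains

variable {X : Type*} {R : ℤ → X → X → Prop}

theorem exists_int_chain_through {n : ℤ} (hsucc : ∀ i, n ≤ i → ∀ x, ∃ y, R i x y)
    (hpred : ∀ i, i < n → ∀ y, ∃ x, R i x y) (x₀ : X) :
    ∃ g : ℤ → X, g n = x₀ ∧ ∀ i, R i (g i) (g (i + 1)) := by
  choose S hS using hsucc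
  choose P hP using hpred
  let g : ℤ → X := fun i => i.inductionOn' n x₀ (fun k hk x => S k hk x)
    (fun k hk x => P (k - 1) (by lia) x)
  refine ⟨g, Int.inductionOn'_self, fun i => ?_⟩
  rcases le_or_gt n i with hi | hi
  · rw [show g (i + 1) = S i hi (g i) from Int.inductionOn'_add_one hi]
    exact hS i hi (g i)
  · have hg : g (i + 1 - 1) = P (i + 1 - 1) (by lia) (g (i + 1)) :=
      Int.inductionOn'_sub_one (by lia)
    have hR := hP (i + 1 - 1) (by lia) (g (i + 1))
    rw [← hg] at hR
    simpa only [add_sub_cancel_right] using hR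

theorem exists_int_chain_extending (hsucc : ∀ i x, ∃ y, R i x y) (hpred : ∀ i y, ∃ x, R i x y)
    (m : ℤ) {l : ℕ} (f : Fin (l + 1) → X)
    (hf : ∀ j : Fin l, R (m + (j : ℕ)) (f j.castSucc) (f j.succ)) :
    ∃ g : ℤ → X, (∀ j : Fin (l + 1), g (m + (j : ℕ)) = f j) ∧ ∀ i, R i (g i) (g (i + 1)) := by
  -- Strengthen the relation so that any chain through `f 0` is forced to follow `f`.
  obtain ⟨g, hg₀, hg⟩ := exists_int_chain_through (n := m)
    (R := fun i x y => R i x y ∧ ∀ j : Fin l, i = m + (j : ℕ) → x = f j.castSucc → y = f j.succ)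
    (fun i _ x => by
      by_cases h : ∃ j : Fin l, i = m + (j : ℕ) ∧ x = f j.castSucc
      · obtain ⟨j, rfl, rfl⟩ := h
        refine ⟨f j.succ, hf j, fun k hk _ => ?_⟩
        rw [show j = k from Fin.ext (by lia)]
      · obtain ⟨y, hy⟩ := hsucc i x
        exact ⟨y, hy, fun j hj hx => (h ⟨j, hj, hx⟩).elim⟩)
    (fun i hi y => (hpred i y).imp fun x hx => ⟨hx, fun j hj => by lia⟩) (f 0)
  refine ⟨g, fun j => ?_, fun i => (hg i).1⟩
  induction j using Fin.induction with
  | zero => simpa using hg₀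
  | succ j ih => simpa [add_assoc] using (hg _).2 j rfl ih

end Chains

section Columns

variable {R : Type*} [CommRing R]

/-- The equation `L_α`, with a coefficient `a` in place of `αⁿ`, as a relation between the
neighbouring columns `c = v(n, ·)` and `d = v(n + 1, ·)` of a solution `v`. -/
def ColumnRel (a : R) (c d : ℤ → R) : Prop :=
  ∀ m, d (m + 1) + c (m + 1) = a * (d m - c m)

/-- The equations of `ColumnRel` that only involve a finite segment of each of the two columns. -/
def SegmentRel {l : ℕ} (a : R) (x y : Fin (l + 1) → R) : Prop :=
  ∀ i : Fin l, y i.succ + x i.succ = a * (y i.castSucc - x i.castSucc)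

/-- Solutions of `v(n+1,m+1) + v(n,m+1) = a(n) (v(n+1,m) − v(n,m))`, the equation `L_α` with `αⁿ`
replaced by an arbitrary coefficient sequence. -/
def IsColumnSolution (a : ℤ → R) (v : ℤ → ℤ → R) : Prop :=
  ∀ n, ColumnRel (a n) (v n) (v (n + 1))

/-- The segment `c(m), …, c(m + l)` of a column. -/
def window (l : ℕ) (c : ℤ → R) (m : ℤ) : Fin (l + 1) → R :=
  fun i => c (m + ((i : ℕ) : ℤ))

variable {a : R} {c d : ℤ → R} {l : ℕ}

theorem ColumnRel.symm (h : ColumnRel a c d) : ColumnRel (-a) d c :=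
  fun m => by linear_combination h m

theorem ColumnRel.segmentRel_window (h : ColumnRel a c d) (m : ℤ) :
    SegmentRel a (window l c m) (window l d m) :=
  fun i => by simpa [window, add_assoc] using h (m + (i : ℕ))

theorem SegmentRel.add_smul {x y ξ η : Fin (l + 1) → R} (h : SegmentRel a x y)
    (h' : SegmentRel a ξ η) (s : R) : SegmentRel a (x + s • ξ) (y + s • η) := fun i => by
  simp only [Pi.add_apply, Pi.smul_apply, smul_eq_mul]
  linear_combination h i + s * h' i

theorem segmentRel_geometric (a t : R) :
    SegmentRel a ((a - t) • fun i : Fin (l + 1) => t ^ (i : ℕ))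
      ((a + t) • fun i : Fin (l + 1) => t ^ (i : ℕ)) := fun i => by
  simp only [Pi.smul_apply, smul_eq_mul, Fin.val_succ, Fin.val_castSucc]
  ring

variable {K : Type*} [Field K] {a : K} {c d : ℤ → K}

theorem exists_columnRel (ha : a ≠ 0) (c : ℤ → K) : ∃ d, ColumnRel a c d := by
  obtain ⟨d, -, hd⟩ := exists_int_chain_through (n := 0)
    (R := fun i z w => w + c (i + 1) = a * (z - c i))
    (fun i _ z => ⟨a * (z - c i) - c (i + 1), by ring⟩)
    (fun i _ w => ⟨a⁻¹ * (w + c (i + 1)) + c i, by field_simp; ring⟩) 0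
  exact ⟨d, hd⟩

-- The columns related to `c` form a line `e + s aᵐ`, and each entry vanishes for one `s` only.
theorem exists_columnRel_forall_ne_zero [Uncountable K] (ha : a ≠ 0) (c : ℤ → K) :
    ∃ d, (∀ m, d m ≠ 0) ∧ ColumnRel a c d := by
  obtain ⟨e, he⟩ := exists_columnRel ha c
  obtain ⟨s, hs⟩ : ∃ s, ∀ m : ℤ, -e m / a ^ m ≠ s := by
    simpa [Function.Surjective] using
      not_surjective_countable_uncountable fun m : ℤ => -e m / a ^ m
  refine ⟨fun m => e m + s * a ^ m, fun m hm => hs m ?_, fun m => ?_⟩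
  · rw [div_eq_iff (zpow_ne_zero m ha)]
    linear_combination -hm
  · simp only [zpow_add_one₀ ha]
    linear_combination he m

theorem exists_isColumnSolution_of_columnRel [Uncountable K] {a : ℤ → K} (ha : ∀ n, a n ≠ 0)
    {n : ℤ} (hc : ∀ m, c m ≠ 0) (hd : ∀ m, d m ≠ 0) (h : ColumnRel (a n) c d) :
    ∃ w, IsColumnSolution a w ∧ (∀ n m, w n m ≠ 0) ∧ w n = c ∧ w (n + 1) = d := by
  obtain ⟨g, hg, hR⟩ := exists_int_chain_extending
    (R := fun i (c d : {c : ℤ → K // ∀ m, c m ≠ 0}) => ColumnRel (a i) c d)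
    (fun i c =>
      let ⟨d, hd, h⟩ := exists_columnRel_forall_ne_zero (ha i) c
      ⟨⟨d, hd⟩, h⟩)
    (fun i d =>
      let ⟨c, hc, h⟩ := exists_columnRel_forall_ne_zero (neg_ne_zero.2 (ha i)) d
      ⟨⟨c, hc⟩, by simpa using h.symm⟩)
    n ![⟨c, hc⟩, ⟨d, hd⟩] (by simpa using h)
  refine ⟨fun n => g n, hR, fun n => (g n).2, ?_, ?_⟩
  · simpa using congrArg Subtype.val (hg 0)
  · simpa using congrArg Subtype.val (hg 1)

theorem exists_ne_zero_add_eq [Infinite K] (s : K) : ∃ z w : K, z ≠ 0 ∧ w ≠ 0 ∧ z + w = s := by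
  classical
  obtain ⟨z, hz⟩ := Infinite.exists_notMem_finset ({0, s} : Finset K)
  simp only [Finset.mem_insert, Finset.mem_singleton, not_or] at hz
  exact ⟨z, s - z, hz.1, sub_ne_zero.2 (Ne.symm hz.2), by ring⟩

theorem exists_columnRel_of_segmentRel [Infinite K] (ha : a ≠ 0) (m : ℤ) {x y : Fin (l + 1) → K}
    (hx : ∀ i, x i ≠ 0) (hy : ∀ i, y i ≠ 0) (h : SegmentRel a x y) :
    ∃ c d, (∀ i, c i ≠ 0) ∧ (∀ i, d i ≠ 0) ∧ ColumnRel a c d ∧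
      window l c m = x ∧ window l d m = y := by
  -- The columns form a chain of pairs `(c i, d i)`, each of which fixes only the sum of the next
  -- pair and the difference of the previous one.
  obtain ⟨g, hg, hR⟩ := exists_int_chain_extending
    (R := fun _ (p q : {z : K // z ≠ 0} × {z : K // z ≠ 0}) =>
      (q.2 + q.1 : K) = a * (p.2 - p.1))
    (fun _ p =>
      let ⟨z, w, hz, hw, hzw⟩ := exists_ne_zero_add_eq (a * (p.2 - p.1) : K)
      ⟨(⟨w, hw⟩, ⟨z, hz⟩), hzw⟩)
    (fun _ q =>
      let ⟨z, w, hz, hw, hzw⟩ := exists_ne_zero_add_eq ((q.2 + q.1) / a : K)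
      ⟨(⟨-w, neg_ne_zero.2 hw⟩, ⟨z, hz⟩), by rw [sub_neg_eq_add, hzw, mul_div_cancel₀ _ ha]⟩)
    m (fun i => (⟨x i, hx i⟩, ⟨y i, hy i⟩)) h
  exact ⟨fun i => (g i).1, fun i => (g i).2, fun i => (g i).1.2, fun i => (g i).2.2, hR,
    funext fun i => by simp [window, hg], funext fun i => by simp [window, hg]⟩

theorem exists_isColumnSolution_window_eq [Uncountable K] {a : ℤ → K} (ha : ∀ n, a n ≠ 0)
    (n m : ℤ) {x : Fin (l + 1) → K} (hx : ∀ i, x i ≠ 0) :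
    ∃ w, IsColumnSolution a w ∧ (∀ n m, w n m ≠ 0) ∧ window l (w n) m = x := by
  let c : ℤ → K := fun i => x (Fin.ofNat (l + 1) (i - m).toNat)
  obtain ⟨d, hd, hcd⟩ := exists_columnRel_forall_ne_zero (ha n) c
  obtain ⟨w, hw, hw₀, hwc, -⟩ := exists_isColumnSolution_of_columnRel ha (fun _ => hx _) hd hcd
  exact ⟨w, hw, hw₀, funext fun i => by simp [window, hwc]⟩

end Columns

section Polynomials

open Polynomial

theorem prod_mul_eq_prod_mul_of_recurrence {M : Type*} [CommMonoid M] {u v p : ℕ → M}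
    (h : ∀ k, u k * p (k + 1) = v k * p k) (N : ℕ) :
    (∏ k ∈ Finset.range N, u k) * p N = (∏ k ∈ Finset.range N, v k) * p 0 := by
  induction N with
  | zero => simp
  | succ N ih =>
    rw [Finset.prod_range_succ, Finset.prod_range_succ, mul_assoc, h, mul_left_comm, ih,
      mul_left_comm, mul_assoc]

theorem prod_dvd_of_recurrence {R : Type*} [CommSemiring R] {u v p : ℕ → R}
    (h : ∀ k, u k * p (k + 1) = v k * p k) {N : ℕ}
    (huv : ∀ i < N, ∀ j < N, IsCoprime (u i) (v j)) : ∏ k ∈ Finset.range N, u k ∣ p 0 := by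
  have hcop : IsCoprime (∏ k ∈ Finset.range N, u k) (∏ k ∈ Finset.range N, v k) :=
    .prod_left fun i hi => .prod_right fun j hj =>
      huv i (Finset.mem_range.1 hi) j (Finset.mem_range.1 hj)
  exact hcop.dvd_of_dvd_mul_left ⟨p N, (prod_mul_eq_prod_mul_of_recurrence h N).symm⟩

variable {R : Type*} [CommRing R] {n l : ℕ}

theorem isCoprime_X_add_C_C_sub_X {a b : R} (h : IsUnit (a + b)) :
    IsCoprime (X + C a) (C b - X) := by
  have hunit : IsUnit (-a - b) := by
    rw [← neg_add']
    exact h.neg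
  simpa using (isCoprime_X_sub_C_of_isUnit_sub hunit).neg_right

/-- The polynomial `∑ φ(eᵢ) Xⁱ`, which encodes a linear functional `φ` through its values on the
geometric progressions `(tⁱ)ᵢ`. -/
noncomputable def symbol (φ : Module.Dual R (Fin n → R)) : R[X] :=
  ∑ i : Fin n, C (φ (Pi.single i 1)) * X ^ (i : ℕ)

theorem eval_symbol (φ : Module.Dual R (Fin n → R)) (t : R) :
    (symbol φ).eval t = φ fun i => t ^ (i : ℕ) := by
  rw [pi_eq_sum_univ' fun i : Fin n => t ^ (i : ℕ), map_sum]
  simp only [symbol, eval_finsetSum, eval_mul, eval_C, eval_pow, eval_X, map_smul,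
    smul_eq_mul, mul_comm]

theorem degree_symbol_lt (φ : Module.Dual R (Fin n → R)) : (symbol φ).degree < n :=
  degree_sum_fin_lt _

theorem symbol_injective : Function.Injective (symbol : Module.Dual R (Fin n → R) → R[X]) := by
  intro φ ψ h
  refine (Pi.basisFun R (Fin n)).ext fun i => ?_
  have hcoeff := congrArg (fun p => p.coeff i) h
  simpa [symbol, coeff_X_pow, Fin.val_inj] using hcoeff

variable {K : Type*} [Field K]

theorem X_add_C_mul_symbol_eq [Infinite K] {a : K} {φ ψ : Module.Dual K (Fin (l + 1) → K)}
    (h : ∀ ξ η, SegmentRel a ξ η → ψ η = φ ξ) :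
    (X + C a) * symbol ψ = (C a - X) * symbol φ := by
  refine Polynomial.funext fun t => ?_
  simpa [eval_symbol, add_comm t] using h _ _ (segmentRel_geometric a t)

theorem dual_eq_zero_of_segmentRel [Infinite K] {a : ℕ → K}
    {φ : ℕ → Module.Dual K (Fin (l + 1) → K)}
    (h : ∀ k ξ η, SegmentRel (a k) ξ η → φ (k + 1) η = φ k ξ)
    (ha : ∀ i < l + 1, ∀ j < l + 1, a i + a j ≠ 0) : φ 0 = 0 := by
  have hdvd : ∏ k ∈ Finset.range (l + 1), (X + C (a k)) ∣ symbol (φ 0) :=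
    prod_dvd_of_recurrence (p := fun k => symbol (φ k)) (fun k => X_add_C_mul_symbol_eq (h k))
      fun i hi j hj => isCoprime_X_add_C_C_sub_X (ha i hi j hj).isUnit
  have hzero : symbol (φ 0) = 0 := by
    refine eq_zero_of_dvd_of_degree_lt hdvd ((degree_symbol_lt _).trans_eq ?_)
    simp [degree_prod]
  exact symbol_injective (hzero.trans (by simp [symbol]))

end Polynomials

section Invariants

open Filter Topology

variable {𝕜 : Type*} [NontriviallyNormedField 𝕜] {l : ℕ}

theorem fderiv_apply_eq_of_eventuallyEq_line {E F G : Type*} [NormedAddCommGroup E]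
    [NormedSpace 𝕜 E] [NormedAddCommGroup F] [NormedSpace 𝕜 F] [NormedAddCommGroup G]
    [NormedSpace 𝕜 G] {f : E → G} {g : F → G} {x ξ : E} {y η : F}
    (hf : DifferentiableAt 𝕜 f x) (hg : DifferentiableAt 𝕜 g y)
    (h : (fun s : 𝕜 => f (x + s • ξ)) =ᶠ[𝓝 0] fun s => g (y + s • η)) :
    fderiv 𝕜 f x ξ = fderiv 𝕜 g y η := by
  rw [← hf.lineDeriv_eq_fderiv, ← hg.lineDeriv_eq_fderiv]
  exact h.deriv_eq

theorem eventually_forall_add_smul_apply_ne_zero {ι : Type*} [Finite ι] {x : ι → 𝕜}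
    (hx : ∀ i, x i ≠ 0) (ξ : ι → 𝕜) : ∀ᶠ s : 𝕜 in 𝓝 0, ∀ i, (x + s • ξ) i ≠ 0 := by
  refine eventually_all.2 fun i => ContinuousAt.eventually_ne ?_ (by simpa using hx i)
  simp only [Pi.add_apply, Pi.smul_apply]
  fun_prop

/-- Invariance of `W` under the `n`-shift on nowhere-vanishing solutions: condition (ii) of
`IsFirstIntegralM` for a general coefficient sequence. -/
def IsShiftInvariant {R : Type*} [CommRing R] {l : ℕ} (a : ℤ → R)
    (W : ℤ → ℤ → (Fin (l + 1) → R) → R) : Prop :=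
  ∀ w, IsColumnSolution a w → (∀ n m, w n m ≠ 0) →
    ∀ n m, W (n + 1) m (window l (w (n + 1)) m) = W n m (window l (w n) m)

variable {a : ℤ → 𝕜} {W : ℤ → ℤ → (Fin (l + 1) → 𝕜) → 𝕜}

theorem IsShiftInvariant.apply_eq [Uncountable 𝕜] (hinv : IsShiftInvariant a W)
    (ha : ∀ n, a n ≠ 0) {n : ℤ} (m : ℤ) {x y : Fin (l + 1) → 𝕜} (hx : ∀ i, x i ≠ 0)
    (hy : ∀ i, y i ≠ 0) (h : SegmentRel (a n) x y) : W (n + 1) m y = W n m x := by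
  obtain ⟨c, d, hc, hd, hcd, rfl, rfl⟩ := exists_columnRel_of_segmentRel (ha n) m hx hy h
  obtain ⟨w, hw, hw₀, rfl, rfl⟩ := exists_isColumnSolution_of_columnRel ha hc hd hcd
  exact hinv w hw hw₀ n m

theorem IsShiftInvariant.fderiv_eq [Uncountable 𝕜] (hinv : IsShiftInvariant a W)
    (hdiff : ∀ n m x, (∀ i, x i ≠ 0) → DifferentiableAt 𝕜 (W n m) x)
    (ha : ∀ n, a n ≠ 0) {n : ℤ} (m : ℤ) {x y ξ η : Fin (l + 1) → 𝕜} (hx : ∀ i, x i ≠ 0)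
    (hy : ∀ i, y i ≠ 0) (h : SegmentRel (a n) x y) (h' : SegmentRel (a n) ξ η) :
    fderiv 𝕜 (W (n + 1) m) y η = fderiv 𝕜 (W n m) x ξ := by
  refine fderiv_apply_eq_of_eventuallyEq_line (hdiff _ m y hy) (hdiff n m x hx) ?_
  filter_upwards [eventually_forall_add_smul_apply_ne_zero hx ξ,
    eventually_forall_add_smul_apply_ne_zero hy η] with s hxs hys
  exact hinv.apply_eq ha m hxs hys (h.add_smul h' s)

theorem IsShiftInvariant.fderiv_eq_zero [Uncountable 𝕜] (hinv : IsShiftInvariant a W)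
    (hdiff : ∀ n m x, (∀ i, x i ≠ 0) → DifferentiableAt 𝕜 (W n m) x)
    (ha : ∀ n, a n ≠ 0) {n m : ℤ} {x : Fin (l + 1) → 𝕜} (hx : ∀ i, x i ≠ 0)
    (hsum : ∀ i < l + 1, ∀ j < l + 1, a (n + (i : ℕ)) + a (n + (j : ℕ)) ≠ 0) :
    fderiv 𝕜 (W n m) x = 0 := by
  obtain ⟨w, hw, hw₀, rfl⟩ := exists_isColumnSolution_window_eq ha n m hx
  let φ : ℤ → Module.Dual 𝕜 (Fin (l + 1) → 𝕜) := fun n => fderiv 𝕜 (W n m) (window l (w n) m)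
  have hφ : ∀ n ξ η, SegmentRel (a n) ξ η → φ (n + 1) η = φ n ξ := fun n ξ η =>
    hinv.fderiv_eq hdiff ha m (fun _ => hw₀ _ _) (fun _ => hw₀ _ _) ((hw n).segmentRel_window m)
  have hzero : φ (n + (0 : ℕ)) = 0 :=
    dual_eq_zero_of_segmentRel (φ := fun k => φ (n + k)) (a := fun k => a (n + k))
      (fun k ξ η h => by simpa [add_assoc] using hφ (n + k) ξ η h) hsum
  ext ξ
  simpa [φ] using DFunLike.congr_fun hzero ξ

end Invariants

theorem necessary_condition_m_direction_general {𝕜 : Type*} [NontriviallyNormedField 𝕜]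
    [Uncountable 𝕜] [NeZero (2 : 𝕜)] {a : ℤ → 𝕜} (ha : ∀ n, a n ≠ 0) {l : ℕ}
    {W : ℤ → ℤ → (Fin (l + 1) → 𝕜) → 𝕜}
    (hdiff : ∀ n m x, (∀ i, x i ≠ 0) → DifferentiableAt 𝕜 (W n m) x)
    (hinv : IsShiftInvariant a W) {n m : ℤ} {x : Fin (l + 1) → 𝕜} (hx : ∀ i, x i ≠ 0)
    (hne : fderiv 𝕜 (W n m) x ≠ 0) :
    ∃ i j : ℕ, i < j ∧ j ≤ l ∧ a (n + i) + a (n + j) = 0 := by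
  by_contra! hsum
  refine hne (hinv.fderiv_eq_zero hdiff ha hx fun i hi j hj => ?_)
  rcases lt_trichotomy i j with hij | rfl | hij
  · exact hsum i j hij (by lia)
  · rw [← two_mul]
    exact mul_ne_zero two_ne_zero (ha _)
  · rw [add_comm]
    exact hsum j i hij (by lia)

theorem pow_sub_eq_neg_one_of_zpow_add_eq_zero {K : Type*} [Field K] {α : K} (hα : α ≠ 0) {n : ℤ}
    {i j : ℕ} (hij : i ≤ j) (h : α ^ (n + i) + α ^ (n + j) = 0) : α ^ (j - i) = -1 := by
  obtain ⟨k, rfl⟩ := Nat.exists_eq_add_of_le hij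
  have hfactor : α ^ (n + i) * (1 + α ^ k) = 0 := by
    rw [← h, Nat.cast_add, ← add_assoc, zpow_add₀ hα (n + i), zpow_natCast]
    ring
  rw [Nat.add_sub_cancel_left]
  linear_combination (mul_eq_zero.1 hfactor).resolve_left (zpow_ne_zero _ hα)

theorem IsFirstIntegralM.exists_pow_eq_neg_one {α : ℂ} (hα : α ≠ 0) {l : ℕ}
    {W : ℤ → ℤ → (Fin (l + 1) → ℂ) → ℂ} (hW : IsFirstIntegralM (LinSol α) l W) :
    ∃ j : ℕ, 1 ≤ j ∧ j ≤ l ∧ α ^ j = -1 := by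
  obtain ⟨hdiff, hinv, ⟨n, m, x, hx, hne⟩, -⟩ := hW
  have : Uncountable ℂ := Set.not_countable_univ_iff.1 not_countable_complex
  obtain ⟨i, j, hij, hj, hsum⟩ := necessary_condition_m_direction_general
    (fun n => zpow_ne_zero n hα) hdiff hinv hx fun h => hne (DFunLike.congr_fun h _)
  exact ⟨j - i, by lia, by lia, pow_sub_eq_neg_one_of_zpow_add_eq_zero hα hij.le hsum⟩

theorem Hfun_eq_zero_iff {α : ℂ} (hα : α ≠ 0) (n : ℤ) (j : ℕ) :
    Hfun α n j = 0 ↔ α ^ (j + 1) = -1 := by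
  simp [Hfun, zpow_ne_zero, hα, add_comm (1 : ℂ), add_eq_zero_iff_eq_neg]

theorem exists_Hfun_eq_zero_iff {α : ℂ} (hα : α ≠ 0) (l : ℕ) :
    (∃ j < l, ∀ n, Hfun α n j = 0) ↔ ∃ j, 1 ≤ j ∧ j ≤ l ∧ α ^ j = -1 := by
  simp only [Hfun_eq_zero_iff hα, forall_const]
  constructor
  · rintro ⟨j, hj, h⟩
    exact ⟨j + 1, by lia, hj, h⟩
  · rintro ⟨j, hj, hjl, h⟩
    exact ⟨j - 1, by lia, by rwa [Nat.sub_add_cancel hj]⟩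

/-- If `L_α` possesses a first integral of order `l̂` in the `m`-direction, then
`H(n,l̃) = 0` for some `0 ≤ l̃ < l̂` and all `n`; equivalently (since `α ≠ 0`),
`α^j = −1` for some `1 ≤ j ≤ l̂`. -/
theorem necessary_condition_m_direction (α : ℂ) (hα : α ≠ 0) (lhat : ℕ) (hl : 1 ≤ lhat)
    (W : ℤ → ℤ → (Fin (lhat + 1) → ℂ) → ℂ)
    (hW : IsFirstIntegralM (LinSol α) lhat W) :
    (∃ lt : ℕ, lt < lhat ∧ ∀ n : ℤ, Hfun α n lt = 0)
    ∧ (∃ j : ℕ, 1 ≤ j ∧ j ≤ lhat ∧ α ^ j = -1) := by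
  have hpow := hW.exists_pow_eq_neg_one hα
  exact ⟨(exists_Hfun_eq_zero_iff hα lhat).2 hpow, hpow⟩
end
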